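/- arXiv:1805.07686 — 2 statements merged into one kernel-verified Lean document; each statement's English description precedes it below -/
import Mathlib

section
/- (Lemma 6.4, bounded case, in explicit form.) Fix an integer k ≥ 1. If S is bounded, i.e. there exists B > 0 such that f vanishes almost everywhere on (B,∞), then the paper's k-server SRPT response-time bound is asymptotically tight against the single-server SRPT mean response time in heavy traffic: lim_{λ → (1/m)⁻} (∫₀^∞ H_λ(x)·f(x) dx) / T̄(λ) = 1. -/
open MeasureTheory Filter

/-- Relevant load `ρ_{≤x} = λ ∫₀^x t f(t) dt`. -/
noncomputable def rhoLe (f : ℝ → ℝ) (lam x : ℝ) : ℝ :=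
  lam * ∫ t in (0:ℝ)..x, t * f t

/-- Tail of the service requirement distribution, `F̄(x) = ∫_x^∞ f(t) dt`. -/
noncomputable def tailS (f : ℝ → ℝ) (x : ℝ) : ℝ :=
  ∫ t in Set.Ioi x, f t

/-- Schrage's exact formula `T̄_λ(x)` for the mean response time of a size-`x`
job in an M/G/1 queue under SRPT. -/
noncomputable def Tsrpt1 (f : ℝ → ℝ) (lam x : ℝ) : ℝ :=
  (lam * (∫ t in (0:ℝ)..x, t ^ 2 * f t) + lam * x ^ 2 * tailS f x)
      / (2 * (1 - rhoLe f lam x) ^ 2)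
    + ∫ t in (0:ℝ)..x, 1 / (1 - rhoLe f lam t)

/-- Overall M/G/1 SRPT mean response time `T̄(λ) = ∫₀^∞ T̄_λ(x) f(x) dx`. -/
noncomputable def TsrptMean (f : ℝ → ℝ) (lam : ℝ) : ℝ :=
  ∫ x in Set.Ioi (0:ℝ), Tsrpt1 f lam x * f x

/-- The paper's simple upper bound `H_λ(x)` on the mean response time of a
size-`x` job under `k`-server SRPT. -/
noncomputable def Hbound (f : ℝ → ℝ) (k : ℕ) (lam x : ℝ) : ℝ :=
  (lam * (∫ t in (0:ℝ)..x, t ^ 2 * f t) + lam * x ^ 2 * tailS f x)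
      / (2 * (1 - rhoLe f lam x) ^ 2)
    + 2 * (k : ℝ) * x / (1 - rhoLe f lam x)

/-!
Write `D = 1 - ρ_{≤S}`, `W = E[waiting time]`, `A = E[S / D]` and `J = E[(S / D)²]`. Both means are
`W` plus a term that is `O(A)`, so it suffices that `A = o(W)` as `ρ → 1`.

If `S ≤ B`, then `min(S', x) ≥ x S' / B` for an independent copy `S'` of `S` and `x ≤ B`, so the
numerator `λ E[min(S', x)²]` of the waiting time is at least `λ x² E[S²] / B²`, whence `W ≥ c J`.
Jensen's inequality gives `A² ≤ J`, so `A² = O(W)`. Finally `J → ∞`, as one sees by restricting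
the expectation to the sizes `S > x` with `ρ_{≤x} = ρ²`: these carry load `ρ (1 - ρ)`, while
`D ≤ 1 - ρ² ≤ 2 (1 - ρ)`. Hence `W → ∞`, and `A² = O(W)` improves to `A = o(W)`.
-/

open Set Asymptotics Topology

theorem isLittleO_of_sq_isBigO {α : Type*} {l : Filter α} {u v : α → ℝ}
    (huv : (fun a => u a ^ 2) =O[l] v) (hv : Tendsto v l atTop) : u =o[l] v := by
  have one_littleO : (fun _ => (1 : ℝ)) =o[l] v :=
    (isLittleO_const_id_atTop (1 : ℝ)).comp_tendsto hv
  have v_littleO_sq : v =o[l] fun a => v a ^ 2 := by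
    simpa only [one_mul, ← sq] using one_littleO.mul_isBigO (isBigO_refl v l)
  exact IsLittleO.of_pow (huv.trans_isLittleO v_littleO_sq) two_ne_zero

theorem tendsto_div_one_sub_atTop : Tendsto (fun r : ℝ => r / (1 - r)) (𝓝[<] 1) atTop := by
  have one_sub : Tendsto (fun r : ℝ => 1 - r) (𝓝[<] 1) (𝓝[>] 0) := by
    refine tendsto_nhdsWithin_iff.2 ⟨?_, ?_⟩
    · exact ((continuous_const.sub continuous_id).tendsto' 1 0 (sub_self 1)).mono_left
        nhdsWithin_le_nhds
    · filter_upwards [self_mem_nhdsWithin] with r hr using sub_pos.2 (mem_Iio.1 hr)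
  exact (tendsto_id.mono_left nhdsWithin_le_nhds).pos_mul_atTop one_pos
    (tendsto_inv_nhdsGT_zero.comp one_sub)

theorem sq_integral_mul_le_integral_sq_mul {α : Type*} [MeasurableSpace α] {μ : Measure α}
    {f g : α → ℝ} (hf_nonneg : 0 ≤ᵐ[μ] f) (hf_one : ∫ a, f a ∂μ = 1)
    (hgf : Integrable (fun a => g a * f a) μ) (hg2f : Integrable (fun a => g a ^ 2 * f a) μ) :
    (∫ a, g a * f a ∂μ) ^ 2 ≤ ∫ a, g a ^ 2 * f a ∂μ := by
  set c := ∫ a, g a * f a ∂μ with hc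
  have hf : Integrable f μ := integrable_of_integral_eq_one hf_one
  have variance_eq : ∫ a, (g a - c) ^ 2 * f a ∂μ = (∫ a, g a ^ 2 * f a ∂μ) - c ^ 2 := by
    calc ∫ a, (g a - c) ^ 2 * f a ∂μ
        = ∫ a, (g a ^ 2 * f a - 2 * c * (g a * f a) + c ^ 2 * f a) ∂μ := by
          congr 1 with a
          ring
      _ = (∫ a, g a ^ 2 * f a ∂μ) - 2 * c * c + c ^ 2 * 1 := by
          rw [integral_add (by fun_prop) (by fun_prop), integral_sub (by fun_prop) (by fun_prop),
            integral_const_mul, integral_const_mul, hf_one, ← hc]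
      _ = (∫ a, g a ^ 2 * f a ∂μ) - c ^ 2 := by ring
  have variance_nonneg : 0 ≤ ∫ a, (g a - c) ^ 2 * f a ∂μ := by
    refine integral_nonneg_of_ae ?_
    filter_upwards [hf_nonneg] with a ha using mul_nonneg (sq_nonneg _) ha
  linarith

theorem continuousOn_Ici_intervalIntegral {E : Type*} [NormedAddCommGroup E] [NormedSpace ℝ E]
    {g : ℝ → E} {a : ℝ} (hg : IntegrableOn g (Ioi a)) :
    ContinuousOn (fun x => ∫ t in a..x, g t) (Ici a) := by
  have eq_sub : EqOn (fun x => ∫ t in a..x, g t)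
      (fun x => (∫ t in Ioi a, g t) - ∫ t in Ioi x, g t) (Ici a) := fun x hx =>
    eq_sub_of_add_eq
      (intervalIntegral.integral_interval_add_Ioi hg (hg.mono_set (Ioi_subset_Ioi hx)))
  exact (continuousOn_const.sub hg.continuousOn_Ici_primitive_Ioi).congr eq_sub

theorem integrableOn_Ioi_continuousOn_mul {f g : ℝ → ℝ} {a b : ℝ} (hf : IntegrableOn f (Ioi a))
    (hf_zero : ∀ᵐ x, b < x → f x = 0) (hg : ContinuousOn g (Icc a b)) :
    IntegrableOn (fun x => g x * f x) (Ioi a) := by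
  have on_Ioc : IntegrableOn (fun x => g x * f x) (Ioc a b) :=
    (hf.mono_set Ioc_subset_Ioi_self).continuousOn_mul_of_subset hg isCompact_Icc
      measurableSet_Ioc Ioc_subset_Icc_self
  refine on_Ioc.of_ae_sdiff_eq_zero measurableSet_Ioi.nullMeasurableSet ?_
  filter_upwards [hf_zero] with x hx hx_mem
  rw [hx (not_le.1 fun hxb => hx_mem.2 ⟨hx_mem.1, hxb⟩), mul_zero]

/-- The expectation `E[g(S)]` for a size `S` on `(0, ∞)` with density `f`. -/
noncomputable def sizeMean (f g : ℝ → ℝ) : ℝ :=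
  ∫ x in Ioi (0 : ℝ), g x * f x

/-- The system load `ρ = λ E[S]`. -/
noncomputable def systemLoad (f : ℝ → ℝ) (lam : ℝ) : ℝ :=
  lam * sizeMean f fun t => t

/-- The mean waiting time of a size-`x` job under SRPT-1, common to `Tsrpt1` and `Hbound`. -/
noncomputable def waitingTime (f : ℝ → ℝ) (lam x : ℝ) : ℝ :=
  (lam * (∫ t in (0 : ℝ)..x, t ^ 2 * f t) + lam * x ^ 2 * tailS f x) /
    (2 * (1 - rhoLe f lam x) ^ 2)

/-- The mean residence time of a size-`x` job under SRPT-1. -/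
noncomputable def residenceTime (f : ℝ → ℝ) (lam x : ℝ) : ℝ :=
  ∫ t in (0 : ℝ)..x, 1 / (1 - rhoLe f lam t)

/-- The mean length of a busy period of jobs of size at most `x` started by `x` work. -/
noncomputable def busyPeriod (f : ℝ → ℝ) (lam x : ℝ) : ℝ :=
  x / (1 - rhoLe f lam x)

theorem sizeMean_const_mul (f g : ℝ → ℝ) (c : ℝ) :
    sizeMean f (fun x => c * g x) = c * sizeMean f g := by
  simp only [sizeMean, mul_assoc, integral_const_mul]

section Load

variable {f : ℝ → ℝ} {lam x : ℝ}

theorem rhoLe_add_mul_integral_Ioi (hf_mean : IntegrableOn (fun t => t * f t) (Ioi 0))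
    (hx : 0 ≤ x) :
    rhoLe f lam x + lam * ∫ t in Ioi x, t * f t = systemLoad f lam := by
  rw [rhoLe, ← mul_add, intervalIntegral.integral_interval_add_Ioi hf_mean
    (hf_mean.mono_set (Ioi_subset_Ioi hx)), systemLoad, sizeMean]

theorem continuousOn_rhoLe (hf_mean : IntegrableOn (fun t => t * f t) (Ioi 0)) :
    ContinuousOn (rhoLe f lam) (Ici 0) :=
  continuousOn_const.mul (continuousOn_Ici_intervalIntegral hf_mean)

theorem exists_rhoLe_eq (hf_mean : IntegrableOn (fun t => t * f t) (Ioi 0)) {r : ℝ}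
    (hr_nonneg : 0 ≤ r) (hr_lt : r < systemLoad f lam) : ∃ x, 0 ≤ x ∧ rhoLe f lam x = r := by
  have tendsto_load : Tendsto (rhoLe f lam) atTop (𝓝 (systemLoad f lam)) :=
    (intervalIntegral_tendsto_integral_Ioi 0 hf_mean tendsto_id).const_mul lam
  obtain ⟨b, hrb, hb⟩ :=
    ((tendsto_load.eventually (lt_mem_nhds hr_lt)).and (eventually_ge_atTop 0)).exists
  have rhoLe_zero : rhoLe f lam 0 = 0 := by simp [rhoLe]
  obtain ⟨x, hx, hxr⟩ := intermediate_value_Icc hb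
    ((continuousOn_rhoLe hf_mean).mono Icc_subset_Ici_self) ⟨rhoLe_zero.trans_le hr_nonneg, hrb.le⟩
  exact ⟨x, hx.1, hxr⟩

theorem rhoLe_le_mul (hf_nonneg : ∀ x, 0 ≤ f x) (hf_one : ∫ t in Ioi (0 : ℝ), f t = 1)
    (hf_mean : IntegrableOn (fun t => t * f t) (Ioi 0)) (hlam : 0 ≤ lam) (hx : 0 ≤ x) :
    rhoLe f lam x ≤ lam * x := by
  have hf : IntegrableOn f (Ioi 0) := integrable_of_integral_eq_one hf_one
  refine mul_le_mul_of_nonneg_left ?_ hlam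
  calc ∫ t in (0 : ℝ)..x, t * f t
      = ∫ t in Ioc 0 x, t * f t := intervalIntegral.integral_of_le hx
    _ ≤ ∫ t in Ioc 0 x, x * f t :=
        setIntegral_mono_on (hf_mean.mono_set Ioc_subset_Ioi_self)
          ((hf.mono_set Ioc_subset_Ioi_self).const_mul x) measurableSet_Ioc
          fun t ht => mul_le_mul_of_nonneg_right ht.2 (hf_nonneg t)
    _ = x * ∫ t in Ioc 0 x, f t := integral_const_mul x _
    _ ≤ x * ∫ t in Ioi 0, f t :=
        mul_le_mul_of_nonneg_left
          (setIntegral_mono_set hf (ae_of_all _ hf_nonneg) Ioc_subset_Ioi_self.eventuallyLE) hx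
    _ = x := by rw [hf_one, mul_one]

theorem monotoneOn_rhoLe (hf_nonneg : ∀ x, 0 ≤ f x)
    (hf_mean : IntegrableOn (fun t => t * f t) (Ioi 0)) (hlam : 0 ≤ lam) :
    MonotoneOn (rhoLe f lam) (Ici 0) := by
  intro x hx y hy hxy
  refine mul_le_mul_of_nonneg_left (intervalIntegral.integral_mono_interval le_rfl hx hxy ?_
    ((intervalIntegrable_iff_integrableOn_Ioc_of_le hy).2
      (hf_mean.mono_set Ioc_subset_Ioi_self))) hlam
  exact ae_restrict_of_forall_mem measurableSet_Ioc fun t ht =>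
    mul_nonneg ht.1.le (hf_nonneg t)

theorem rhoLe_le_systemLoad (hf_nonneg : ∀ x, 0 ≤ f x)
    (hf_mean : IntegrableOn (fun t => t * f t) (Ioi 0)) (hlam : 0 ≤ lam) (hx : 0 ≤ x) :
    rhoLe f lam x ≤ systemLoad f lam := by
  rw [← rhoLe_add_mul_integral_Ioi hf_mean hx]
  exact le_add_of_nonneg_right (mul_nonneg hlam (setIntegral_nonneg measurableSet_Ioi
    fun t ht => mul_nonneg (hx.trans (le_of_lt ht)) (hf_nonneg t)))

end Load

/-- An M/G/1 queue with job-size density `f` of finite mean and arrival rate `lam` that is stable,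
i.e. has load `ρ < 1`. -/
structure IsStable (f : ℝ → ℝ) (lam : ℝ) : Prop where
  nonneg : ∀ x, 0 ≤ f x
  integrableOn_id_mul : IntegrableOn (fun t => t * f t) (Ioi 0)
  rate_nonneg : 0 ≤ lam
  load_lt_one : systemLoad f lam < 1

namespace IsStable

variable {f : ℝ → ℝ} {lam x : ℝ}

theorem one_sub_rhoLe_pos (hs : IsStable f lam) (hx : 0 ≤ x) : 0 < 1 - rhoLe f lam x :=
  sub_pos.2 ((rhoLe_le_systemLoad hs.nonneg hs.integrableOn_id_mul hs.rate_nonneg hx).trans_lt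
    hs.load_lt_one)

theorem one_sub_rhoLe_le {y : ℝ} (hs : IsStable f lam) (hx : 0 ≤ x) (hxy : x ≤ y) :
    1 - rhoLe f lam y ≤ 1 - rhoLe f lam x :=
  sub_le_sub_left (monotoneOn_rhoLe hs.nonneg hs.integrableOn_id_mul hs.rate_nonneg hx
    (hx.trans hxy) hxy) 1

theorem continuousOn_busyPeriod (hs : IsStable f lam) : ContinuousOn (busyPeriod f lam) (Ici 0) :=
  continuousOn_id.div (continuousOn_const.sub (continuousOn_rhoLe hs.integrableOn_id_mul))
    fun _ hx => (hs.one_sub_rhoLe_pos hx).ne'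

theorem continuousOn_one_div_one_sub_rhoLe (hs : IsStable f lam) :
    ContinuousOn (fun x => 1 / (1 - rhoLe f lam x)) (Ici 0) :=
  continuousOn_const.div (continuousOn_const.sub (continuousOn_rhoLe hs.integrableOn_id_mul))
    fun _ hx => (hs.one_sub_rhoLe_pos hx).ne'

theorem continuousOn_residenceTime (hs : IsStable f lam) {b : ℝ} (hb : 0 ≤ b) :
    ContinuousOn (residenceTime f lam) (Icc 0 b) := by
  have integrand : ContinuousOn (fun x => 1 / (1 - rhoLe f lam x)) (Icc 0 b) :=
    hs.continuousOn_one_div_one_sub_rhoLe.mono Icc_subset_Ici_self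
  rw [← uIcc_of_le hb] at integrand ⊢
  exact intervalIntegral.continuousOn_primitive_interval integrand.integrableOn_uIcc

theorem continuousOn_waitingTime (hs : IsStable f lam) (hf : IntegrableOn f (Ioi 0))
    (hf_sq : IntegrableOn (fun t => t ^ 2 * f t) (Ioi 0)) :
    ContinuousOn (waitingTime f lam) (Ici 0) := by
  have tail : ContinuousOn (tailS f) (Ici 0) := hf.continuousOn_Ici_primitive_Ioi
  refine ContinuousOn.div
    ((continuousOn_const.mul (continuousOn_Ici_intervalIntegral hf_sq)).add
      ((continuousOn_const.mul (continuousOn_pow 2)).mul tail))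
    (continuousOn_const.mul
      ((continuousOn_const.sub (continuousOn_rhoLe hs.integrableOn_id_mul)).pow 2))
    fun x hx => ?_
  have := hs.one_sub_rhoLe_pos hx
  positivity

theorem residenceTime_nonneg (hs : IsStable f lam) (hx : 0 ≤ x) : 0 ≤ residenceTime f lam x :=
  intervalIntegral.integral_nonneg hx fun _ ht =>
    (one_div_pos.2 (hs.one_sub_rhoLe_pos ht.1)).le

theorem residenceTime_le_busyPeriod (hs : IsStable f lam) (hx : 0 ≤ x) :
    residenceTime f lam x ≤ busyPeriod f lam x := by
  have integrand : ContinuousOn (fun t => 1 / (1 - rhoLe f lam t)) (Icc 0 x) :=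
    hs.continuousOn_one_div_one_sub_rhoLe.mono Icc_subset_Ici_self
  calc residenceTime f lam x
      ≤ ∫ _ in (0 : ℝ)..x, 1 / (1 - rhoLe f lam x) := by
        refine intervalIntegral.integral_mono_on hx (integrand.intervalIntegrable_of_Icc hx)
          intervalIntegrable_const fun t ht => ?_
        exact one_div_le_one_div_of_le (hs.one_sub_rhoLe_pos hx)
          (hs.one_sub_rhoLe_le ht.1 ht.2)
    _ = busyPeriod f lam x := by
        rw [intervalIntegral.integral_const, sub_zero, smul_eq_mul, mul_one_div, busyPeriod]

theorem busyPeriod_sq_tail_le (hs : IsStable f lam)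
    (hbusy : IntegrableOn (fun t => busyPeriod f lam t ^ 2 * f t) (Ioi 0)) (hx : 0 ≤ x) :
    x / (1 - rhoLe f lam x) ^ 2 * ∫ t in Ioi x, t * f t ≤
      sizeMean f fun t => busyPeriod f lam t ^ 2 := by
  have Ioi_subset : Ioi x ⊆ Ioi 0 := Ioi_subset_Ioi hx
  calc x / (1 - rhoLe f lam x) ^ 2 * ∫ t in Ioi x, t * f t
      = ∫ t in Ioi x, x / (1 - rhoLe f lam x) ^ 2 * (t * f t) := (integral_const_mul _ _).symm
    _ ≤ ∫ t in Ioi x, busyPeriod f lam t ^ 2 * f t := by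
        refine setIntegral_mono_on ((hs.integrableOn_id_mul.mono_set Ioi_subset).const_mul _)
          (hbusy.mono_set Ioi_subset) measurableSet_Ioi fun t ht => ?_
        have hxt : x ≤ t := le_of_lt ht
        have slack_pos := hs.one_sub_rhoLe_pos (hx.trans hxt)
        have slack_le := hs.one_sub_rhoLe_le hx hxt
        rw [← mul_assoc, div_mul_eq_mul_div, busyPeriod, div_pow, sq t]
        have ht_nonneg : 0 ≤ t := hx.trans hxt
        have hft := hs.nonneg t
        gcongr
    _ ≤ sizeMean f fun t => busyPeriod f lam t ^ 2 :=
        setIntegral_mono_set hbusy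
          (ae_of_all _ fun t => mul_nonneg (sq_nonneg _) (hs.nonneg t)) Ioi_subset.eventuallyLE

theorem exists_rhoLe_eq_systemLoad_sq (hs : IsStable f lam)
    (hf_one : ∫ t in Ioi (0 : ℝ), f t = 1) (hload_pos : 0 < systemLoad f lam) :
    ∃ x, 0 ≤ x ∧ rhoLe f lam x = systemLoad f lam ^ 2 ∧
      (sizeMean f fun t => t) * systemLoad f lam ≤ x ∧
      ∫ t in Ioi x, t * f t = (sizeMean f fun t => t) * (1 - systemLoad f lam) := by
  have hlam : 0 < lam := hs.rate_nonneg.lt_of_ne' (left_ne_zero_of_mul hload_pos.ne')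
  have load_eq : systemLoad f lam = lam * sizeMean f fun t => t := rfl
  have load_sq_lt : systemLoad f lam ^ 2 < systemLoad f lam :=
    pow_lt_self_of_lt_one₀ hload_pos hs.load_lt_one one_lt_two
  obtain ⟨x, hx, hx_load⟩ := exists_rhoLe_eq hs.integrableOn_id_mul (sq_nonneg _) load_sq_lt
  refine ⟨x, hx, hx_load, ?_, ?_⟩
  · have load_le := rhoLe_le_mul hs.nonneg hf_one hs.integrableOn_id_mul hlam.le hx
    refine le_of_mul_le_mul_left ?_ hlam
    linear_combination load_le - hx_load - systemLoad f lam * load_eq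
  · have load_split := rhoLe_add_mul_integral_Ioi (lam := lam) hs.integrableOn_id_mul hx
    refine mul_left_cancel₀ hlam.ne' ?_
    linear_combination load_split - hx_load + (1 - systemLoad f lam) * load_eq

theorem le_sizeMean_busyPeriod_sq (hs : IsStable f lam)
    (hf_one : ∫ t in Ioi (0 : ℝ), f t = 1) (hload_pos : 0 < systemLoad f lam)
    (hbusy : IntegrableOn (fun t => busyPeriod f lam t ^ 2 * f t) (Ioi 0)) :
    (sizeMean f fun t => t) ^ 2 / 4 * (systemLoad f lam / (1 - systemLoad f lam)) ≤
      sizeMean f fun t => busyPeriod f lam t ^ 2 := by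
  obtain ⟨x, hx, hx_load, x_ge, tail_eq⟩ := hs.exists_rhoLe_eq_systemLoad_sq hf_one hload_pos
  have mean_pos : 0 < sizeMean f fun t => t := pos_of_mul_pos_right hload_pos hs.rate_nonneg
  have slack_pos : 0 < 1 - systemLoad f lam := sub_pos.2 hs.load_lt_one
  refine le_trans ?_ (hs.busyPeriod_sq_tail_le hbusy hx)
  rw [hx_load, tail_eq]
  set ρ := systemLoad f lam
  set m := sizeMean f fun t => t
  have sq_slack_pos : 0 < 1 - ρ ^ 2 := by nlinarith
  have sq_slack_le : 1 - ρ ^ 2 ≤ 2 * (1 - ρ) := by nlinarith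
  calc m ^ 2 / 4 * (ρ / (1 - ρ))
      = m * ρ / (2 * (1 - ρ)) ^ 2 * (m * (1 - ρ)) := by
        field_simp
        ring
    _ ≤ x / (1 - ρ ^ 2) ^ 2 * (m * (1 - ρ)) := by gcongr

end IsStable

/-- `f` is, on `(0, ∞)`, the density of a service requirement `S` bounded by `B`. -/
structure IsBoundedSizeDensity (f : ℝ → ℝ) (B : ℝ) : Prop where
  nonneg : ∀ x, 0 ≤ f x
  integral_eq_one : ∫ t in Ioi (0 : ℝ), f t = 1
  bound_pos : 0 < B
  ae_eq_zero : ∀ᵐ x, B < x → f x = 0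

namespace IsBoundedSizeDensity

variable {f g h : ℝ → ℝ} {B lam x : ℝ}

theorem integrableOn (hf : IsBoundedSizeDensity f B) : IntegrableOn f (Ioi 0) :=
  integrable_of_integral_eq_one hf.integral_eq_one

theorem integrableOn_mul (hf : IsBoundedSizeDensity f B) (hg : ContinuousOn g (Icc 0 B)) :
    IntegrableOn (fun x => g x * f x) (Ioi 0) :=
  integrableOn_Ioi_continuousOn_mul hf.integrableOn hf.ae_eq_zero hg

theorem integrableOn_id_mul (hf : IsBoundedSizeDensity f B) :
    IntegrableOn (fun t => t * f t) (Ioi 0) :=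
  hf.integrableOn_mul continuousOn_id

theorem isStable (hf : IsBoundedSizeDensity f B) (hlam : 0 ≤ lam)
    (hload : systemLoad f lam < 1) : IsStable f lam :=
  ⟨hf.nonneg, hf.integrableOn_id_mul, hlam, hload⟩

theorem sizeMean_add (hf : IsBoundedSizeDensity f B) (hg : ContinuousOn g (Icc 0 B))
    (hh : ContinuousOn h (Icc 0 B)) :
    sizeMean f (fun x => g x + h x) = sizeMean f g + sizeMean f h := by
  simp only [sizeMean, add_mul]
  exact integral_add (hf.integrableOn_mul hg) (hf.integrableOn_mul hh)

theorem sizeMean_mono (hf : IsBoundedSizeDensity f B) (hg : ContinuousOn g (Icc 0 B))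
    (hh : ContinuousOn h (Icc 0 B)) (hgh : ∀ x ∈ Icc 0 B, g x ≤ h x) :
    sizeMean f g ≤ sizeMean f h := by
  refine setIntegral_mono_on_ae (hf.integrableOn_mul hg) (hf.integrableOn_mul hh)
    measurableSet_Ioi ?_
  filter_upwards [hf.ae_eq_zero] with x hx_zero hx
  rcases le_or_gt x B with hxB | hxB
  · exact mul_le_mul_of_nonneg_right (hgh x ⟨le_of_lt hx, hxB⟩) (hf.nonneg x)
  · simp only [hx_zero hxB, mul_zero, le_refl]

theorem sq_sizeMean_le (hf : IsBoundedSizeDensity f B) (hg : ContinuousOn g (Icc 0 B)) :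
    sizeMean f g ^ 2 ≤ sizeMean f fun x => g x ^ 2 :=
  sq_integral_mul_le_integral_sq_mul (ae_of_all _ hf.nonneg) hf.integral_eq_one
    (hf.integrableOn_mul hg) (hf.integrableOn_mul (hg.pow 2))

theorem continuousOn_busyPeriod (hf : IsBoundedSizeDensity f B) (hlam : 0 ≤ lam)
    (hload : systemLoad f lam < 1) : ContinuousOn (busyPeriod f lam) (Icc 0 B) :=
  ((hf.isStable hlam hload).continuousOn_busyPeriod).mono
    Icc_subset_Ici_self

theorem continuousOn_residenceTime (hf : IsBoundedSizeDensity f B) (hlam : 0 ≤ lam)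
    (hload : systemLoad f lam < 1) : ContinuousOn (residenceTime f lam) (Icc 0 B) :=
  (hf.isStable hlam hload).continuousOn_residenceTime hf.bound_pos.le

theorem continuousOn_waitingTime (hf : IsBoundedSizeDensity f B) (hlam : 0 ≤ lam)
    (hload : systemLoad f lam < 1) : ContinuousOn (waitingTime f lam) (Icc 0 B) :=
  ((hf.isStable hlam hload).continuousOn_waitingTime hf.integrableOn
    (hf.integrableOn_mul (continuousOn_pow 2))).mono Icc_subset_Ici_self

theorem sizeMean_residenceTime_nonneg (hf : IsBoundedSizeDensity f B) (hlam : 0 ≤ lam)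
    (hload : systemLoad f lam < 1) : 0 ≤ sizeMean f (residenceTime f lam) :=
  setIntegral_nonneg measurableSet_Ioi fun x hx =>
    mul_nonneg ((hf.isStable hlam hload).residenceTime_nonneg (le_of_lt hx))
      (hf.nonneg x)

theorem sizeMean_residenceTime_le (hf : IsBoundedSizeDensity f B) (hlam : 0 ≤ lam)
    (hload : systemLoad f lam < 1) :
    sizeMean f (residenceTime f lam) ≤ sizeMean f (busyPeriod f lam) :=
  hf.sizeMean_mono (hf.continuousOn_residenceTime hlam hload)
    (hf.continuousOn_busyPeriod hlam hload) fun _ hx =>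
      (hf.isStable hlam hload).residenceTime_le_busyPeriod hx.1

theorem TsrptMean_eq_add (hf : IsBoundedSizeDensity f B) (hlam : 0 ≤ lam)
    (hload : systemLoad f lam < 1) :
    TsrptMean f lam =
      sizeMean f (waitingTime f lam) + sizeMean f (residenceTime f lam) :=
  hf.sizeMean_add (hf.continuousOn_waitingTime hlam hload)
    (hf.continuousOn_residenceTime hlam hload)

theorem sizeMean_Hbound_eq_add (hf : IsBoundedSizeDensity f B) (k : ℕ) (hlam : 0 ≤ lam)
    (hload : systemLoad f lam < 1) :
    sizeMean f (Hbound f k lam) =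
      sizeMean f (waitingTime f lam) + 2 * k * sizeMean f (busyPeriod f lam) := by
  have Hbound_eq : Hbound f k lam =
      fun x => waitingTime f lam x + 2 * k * busyPeriod f lam x := by
    ext x
    rw [Hbound, waitingTime, busyPeriod, mul_div_assoc]
  rw [Hbound_eq, ← sizeMean_const_mul]
  exact hf.sizeMean_add (hf.continuousOn_waitingTime hlam hload)
    (continuousOn_const.mul (hf.continuousOn_busyPeriod hlam hload))

theorem integral_Ioi_sq_le_tailS (hf : IsBoundedSizeDensity f B) (hx : 0 ≤ x) :
    ∫ t in Ioi x, t ^ 2 * f t ≤ B ^ 2 * tailS f x := by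
  have Ioi_subset : Ioi x ⊆ Ioi 0 := Ioi_subset_Ioi hx
  rw [tailS, ← integral_const_mul]
  refine setIntegral_mono_on_ae
    ((hf.integrableOn_mul (continuousOn_pow 2)).mono_set Ioi_subset)
    ((hf.integrableOn.mono_set Ioi_subset).const_mul _) measurableSet_Ioi ?_
  filter_upwards [hf.ae_eq_zero] with t ht_zero ht
  rcases le_or_gt t B with htB | htB
  · exact mul_le_mul_of_nonneg_right (pow_le_pow_left₀ (hx.trans (le_of_lt ht)) htB 2)
      (hf.nonneg t)
  · simp only [ht_zero htB, mul_zero, le_refl]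

theorem secondMoment_le_truncated (hf : IsBoundedSizeDensity f B) (hx : x ∈ Icc 0 B) :
    (sizeMean f fun t => t ^ 2) / B ^ 2 * x ^ 2 ≤
      (∫ t in (0 : ℝ)..x, t ^ 2 * f t) + x ^ 2 * tailS f x := by
  have hB := hf.bound_pos
  have sq_int : IntegrableOn (fun t => t ^ 2 * f t) (Ioi 0) :=
    hf.integrableOn_mul (continuousOn_pow 2)
  have head_nonneg : 0 ≤ ∫ t in (0 : ℝ)..x, t ^ 2 * f t :=
    intervalIntegral.integral_nonneg hx.1 fun t _ => mul_nonneg (sq_nonneg t) (hf.nonneg t)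
  have ratio_le_one : x ^ 2 / B ^ 2 ≤ 1 :=
    div_le_one_of_le₀ (pow_le_pow_left₀ hx.1 hx.2 2) (sq_nonneg B)
  have split := intervalIntegral.integral_interval_add_Ioi sq_int
    (sq_int.mono_set (Ioi_subset_Ioi hx.1))
  calc (sizeMean f fun t => t ^ 2) / B ^ 2 * x ^ 2
      = x ^ 2 / B ^ 2 * ((∫ t in (0 : ℝ)..x, t ^ 2 * f t) + ∫ t in Ioi x, t ^ 2 * f t) := by
        rw [split, sizeMean]
        ring
    _ ≤ x ^ 2 / B ^ 2 * ((∫ t in (0 : ℝ)..x, t ^ 2 * f t) + B ^ 2 * tailS f x) := by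
        gcongr
        exact hf.integral_Ioi_sq_le_tailS hx.1
    _ = x ^ 2 / B ^ 2 * (∫ t in (0 : ℝ)..x, t ^ 2 * f t) + x ^ 2 * tailS f x := by
        field_simp
    _ ≤ (∫ t in (0 : ℝ)..x, t ^ 2 * f t) + x ^ 2 * tailS f x := by
        gcongr
        exact mul_le_of_le_one_left head_nonneg ratio_le_one

theorem mul_busyPeriod_sq_le_waitingTime (hf : IsBoundedSizeDensity f B) (hlam : 0 ≤ lam)
    (hx : x ∈ Icc 0 B) :
    lam * (sizeMean f fun t => t ^ 2) / (2 * B ^ 2) * busyPeriod f lam x ^ 2 ≤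
      waitingTime f lam x := by
  calc lam * (sizeMean f fun t => t ^ 2) / (2 * B ^ 2) * busyPeriod f lam x ^ 2
      = lam * ((sizeMean f fun t => t ^ 2) / B ^ 2 * x ^ 2) /
          (2 * (1 - rhoLe f lam x) ^ 2) := by
        rw [busyPeriod]
        generalize 1 - rhoLe f lam x = slack
        ring
    _ ≤ lam * ((∫ t in (0 : ℝ)..x, t ^ 2 * f t) + x ^ 2 * tailS f x) /
          (2 * (1 - rhoLe f lam x) ^ 2) := by
        gcongr
        exact hf.secondMoment_le_truncated hx
    _ = waitingTime f lam x := by rw [waitingTime, mul_add, mul_assoc lam]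

theorem mul_sizeMean_busyPeriod_sq_le (hf : IsBoundedSizeDensity f B) (hlam : 0 ≤ lam)
    (hload : systemLoad f lam < 1) :
    lam * (sizeMean f fun t => t ^ 2) / (2 * B ^ 2) *
        (sizeMean f fun x => busyPeriod f lam x ^ 2) ≤
      sizeMean f (waitingTime f lam) := by
  rw [← sizeMean_const_mul]
  exact hf.sizeMean_mono (continuousOn_const.mul ((hf.continuousOn_busyPeriod hlam hload).pow 2))
    (hf.continuousOn_waitingTime hlam hload) fun _ => hf.mul_busyPeriod_sq_le_waitingTime hlam

end IsBoundedSizeDensity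

section HeavyTraffic

/-- The heavy-traffic regime `ρ → 1⁻`, as a filter on arrival rates. -/
noncomputable def heavyTraffic (f : ℝ → ℝ) : Filter ℝ :=
  𝓝[<] (1 / sizeMean f fun t => t)

variable {f : ℝ → ℝ} {B : ℝ}

theorem eventually_lt_heavyTraffic {a : ℝ} (ha : a < 1 / sizeMean f fun t => t) :
    ∀ᶠ lam in heavyTraffic f, a < lam :=
  nhdsWithin_le_nhds (lt_mem_nhds ha)

theorem tendsto_systemLoad_heavyTraffic (hmean : 0 < sizeMean f fun t => t) :
    Tendsto (systemLoad f) (heavyTraffic f) (𝓝[<] 1) := by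
  refine tendsto_nhdsWithin_iff.2 ⟨?_, ?_⟩
  · exact ((continuous_id.mul continuous_const).tendsto' _ _
      (one_div_mul_cancel hmean.ne')).mono_left nhdsWithin_le_nhds
  · filter_upwards [self_mem_nhdsWithin] with lam hlam using (lt_div_iff₀ hmean).1 hlam

theorem eventually_stable_heavyTraffic (hmean : 0 < sizeMean f fun t => t) :
    ∀ᶠ lam in heavyTraffic f, 0 < lam ∧ systemLoad f lam < 1 :=
  (eventually_lt_heavyTraffic (one_div_pos.2 hmean)).and
    ((tendsto_systemLoad_heavyTraffic hmean).eventually self_mem_nhdsWithin)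

namespace IsBoundedSizeDensity

theorem tendsto_sizeMean_busyPeriod_sq (hf : IsBoundedSizeDensity f B)
    (hmean : 0 < sizeMean f fun t => t) :
    Tendsto (fun lam => sizeMean f fun x => busyPeriod f lam x ^ 2) (heavyTraffic f) atTop := by
  have lower_bound : Tendsto (fun lam => (sizeMean f fun t => t) ^ 2 / 4 *
      (systemLoad f lam / (1 - systemLoad f lam))) (heavyTraffic f) atTop :=
    (tendsto_div_one_sub_atTop.comp (tendsto_systemLoad_heavyTraffic hmean)).const_mul_atTop
      (by positivity)
  refine tendsto_atTop_mono' _ ?_ lower_bound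
  filter_upwards [eventually_stable_heavyTraffic hmean] with lam ⟨hlam, hload⟩
  exact (hf.isStable hlam.le hload).le_sizeMean_busyPeriod_sq hf.integral_eq_one
    (mul_pos hlam hmean)
    (hf.integrableOn_mul ((hf.continuousOn_busyPeriod hlam.le hload).pow 2))

theorem exists_mul_busyPeriod_sq_le_waitingTime (hf : IsBoundedSizeDensity f B)
    (hmean : 0 < sizeMean f fun t => t) :
    ∃ c > 0, ∀ᶠ lam in heavyTraffic f,
      c * (sizeMean f fun x => busyPeriod f lam x ^ 2) ≤ sizeMean f (waitingTime f lam) := by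
  have hB := hf.bound_pos
  have second_moment_pos : 0 < sizeMean f fun t => t ^ 2 :=
    (pow_pos hmean 2).trans_le (hf.sq_sizeMean_le continuousOn_id)
  have half_lt : 1 / (2 * sizeMean f fun t => t) < 1 / sizeMean f fun t => t :=
    one_div_lt_one_div_of_lt hmean (by linarith)
  refine ⟨1 / (2 * sizeMean f fun t => t) * (sizeMean f fun t => t ^ 2) / (2 * B ^ 2),
    by positivity, ?_⟩
  filter_upwards [eventually_stable_heavyTraffic hmean, eventually_lt_heavyTraffic half_lt]
    with lam ⟨hlam, hload⟩ hlam_gt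
  have busy_sq_nonneg : 0 ≤ sizeMean f fun x => busyPeriod f lam x ^ 2 :=
    integral_nonneg fun x => mul_nonneg (sq_nonneg _) (hf.nonneg x)
  refine le_trans ?_ (hf.mul_sizeMean_busyPeriod_sq_le hlam.le hload)
  gcongr

theorem tendsto_sizeMean_waitingTime (hf : IsBoundedSizeDensity f B)
    (hmean : 0 < sizeMean f fun t => t) :
    Tendsto (fun lam => sizeMean f (waitingTime f lam)) (heavyTraffic f) atTop := by
  obtain ⟨c, hc, hle⟩ := hf.exists_mul_busyPeriod_sq_le_waitingTime hmean
  exact tendsto_atTop_mono' _ hle ((hf.tendsto_sizeMean_busyPeriod_sq hmean).const_mul_atTop hc)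

theorem busyPeriod_isLittleO_waitingTime (hf : IsBoundedSizeDensity f B)
    (hmean : 0 < sizeMean f fun t => t) :
    (fun lam => sizeMean f (busyPeriod f lam)) =o[heavyTraffic f]
      fun lam => sizeMean f (waitingTime f lam) := by
  refine isLittleO_of_sq_isBigO ?_ (hf.tendsto_sizeMean_waitingTime hmean)
  obtain ⟨c, hc, hle⟩ := hf.exists_mul_busyPeriod_sq_le_waitingTime hmean
  refine IsBigO.of_bound c⁻¹ ?_
  filter_upwards [hle, eventually_stable_heavyTraffic hmean] with lam hle_lam ⟨hlam, hload⟩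
  calc ‖sizeMean f (busyPeriod f lam) ^ 2‖
      = sizeMean f (busyPeriod f lam) ^ 2 := Real.norm_of_nonneg (sq_nonneg _)
    _ ≤ sizeMean f fun x => busyPeriod f lam x ^ 2 :=
        hf.sq_sizeMean_le (hf.continuousOn_busyPeriod hlam.le hload)
    _ ≤ c⁻¹ * sizeMean f (waitingTime f lam) := (le_inv_mul_iff₀ hc).2 hle_lam
    _ ≤ c⁻¹ * ‖sizeMean f (waitingTime f lam)‖ := by
        gcongr
        exact Real.le_norm_self _

theorem residenceTime_isLittleO_waitingTime (hf : IsBoundedSizeDensity f B)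
    (hmean : 0 < sizeMean f fun t => t) :
    (fun lam => sizeMean f (residenceTime f lam)) =o[heavyTraffic f]
      fun lam => sizeMean f (waitingTime f lam) := by
  refine IsBigO.trans_isLittleO (IsBigO.of_norm_eventuallyLE ?_)
    (hf.busyPeriod_isLittleO_waitingTime hmean)
  filter_upwards [eventually_stable_heavyTraffic hmean] with lam ⟨hlam, hload⟩
  rw [Real.norm_of_nonneg (hf.sizeMean_residenceTime_nonneg hlam.le hload)]
  exact hf.sizeMean_residenceTime_le hlam.le hload

theorem TsrptMean_isEquivalent_waitingTime (hf : IsBoundedSizeDensity f B)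
    (hmean : 0 < sizeMean f fun t => t) :
    TsrptMean f ~[heavyTraffic f] fun lam => sizeMean f (waitingTime f lam) := by
  refine (IsEquivalent.refl.add_isLittleO
    (hf.residenceTime_isLittleO_waitingTime hmean)).congr_left ?_
  filter_upwards [eventually_stable_heavyTraffic hmean] with lam ⟨hlam, hload⟩
  exact (hf.TsrptMean_eq_add hlam.le hload).symm

theorem Hbound_isEquivalent_waitingTime (hf : IsBoundedSizeDensity f B)
    (hmean : 0 < sizeMean f fun t => t) (k : ℕ) :
    (fun lam => sizeMean f (Hbound f k lam)) ~[heavyTraffic f]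
      fun lam => sizeMean f (waitingTime f lam) := by
  refine (IsEquivalent.refl.add_isLittleO
    ((hf.busyPeriod_isLittleO_waitingTime hmean).const_mul_left (2 * k))).congr_left ?_
  filter_upwards [eventually_stable_heavyTraffic hmean] with lam ⟨hlam, hload⟩
  exact (hf.sizeMean_Hbound_eq_add k hlam.le hload).symm

end IsBoundedSizeDensity

end HeavyTraffic

/-- **Lemma 6.4, bounded case.** If `S` is bounded, then
`lim_{λ → (1/m)⁻} (∫₀^∞ H_λ(x) f(x) dx) / T̄(λ) = 1`. -/
theorem Hbound_ratio_tendsto_one_bounded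
    (f : ℝ → ℝ) (m : ℝ)
    (hf_meas : Measurable f)
    (hf_nonneg : ∀ x, 0 ≤ f x)
    (hf_zero : ∀ x ≤ 0, f x = 0)
    (hf_prob : ∫ t in Set.Ioi (0:ℝ), f t = 1)
    (hm_int : Integrable (fun t => t * f t) (volume.restrict (Set.Ioi 0)))
    (hm_def : m = ∫ t in Set.Ioi (0:ℝ), t * f t)
    (hm_pos : 0 < m)
    (k : ℕ) (hk : 1 ≤ k)
    (hbounded : ∃ B > (0:ℝ), ∀ᵐ x : ℝ, B < x → f x = 0) :
    Tendsto (fun lam => (∫ x in Set.Ioi (0:ℝ), Hbound f k lam x * f x) / TsrptMean f lam)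
      (nhdsWithin (1/m) (Set.Iio (1/m))) (nhds 1) := by
  obtain ⟨B, hB, hf_bounded⟩ := hbounded
  subst hm_def
  have hf : IsBoundedSizeDensity f B := ⟨hf_nonneg, hf_prob, hB, hf_bounded⟩
  have TsrptMean_equiv := hf.TsrptMean_isEquivalent_waitingTime hm_pos
  have TsrptMean_ne_zero : ∀ᶠ lam in heavyTraffic f, TsrptMean f lam ≠ 0 :=
    (TsrptMean_equiv.symm.tendsto_atTop
      (hf.tendsto_sizeMean_waitingTime hm_pos)).eventually_ne_atTop 0
  exact (isEquivalent_iff_tendsto_one TsrptMean_ne_zero).1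
    ((hf.Hbound_isEquivalent_waitingTime hm_pos k).trans TsrptMean_equiv.symm)
end

section
/- (Lemma 6.11 in explicit form.) If S is unbounded (F̄(x) > 0 for all x > 0) and the tail of S has upper Matuszewska index less than −2, expressed via the equivalent Potter-type bound — there exist constants C > 0, ε > 0 and x₀ > 0 such that F̄(γx) ≤ C·γ^{−(2+ε)}·F̄(x) for all x ≥ x₀ and all γ ≥ 1 — then the residence-type component of the FB mean response time is negligible in heavy traffic: lim_{λ → (1/m)⁻} (∫₀^∞ R̄_λ(x)·f(x) dx) / T̄^FB(λ) = 0. -/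
open MeasureTheory Filter

/-- Truncated relevant load for FB, `ρ_{x̄} = λ ∫₀^∞ min(t,x) f(t) dt`. -/
noncomputable def rhoBar (f : ℝ → ℝ) (lam x : ℝ) : ℝ :=
  lam * ∫ t in Set.Ioi (0:ℝ), min t x * f t

/-- Waiting-type component of the FB-1 mean response time of a size-`x` job,
`W̄_λ(x) = λ (∫₀^∞ min(t,x)² f(t) dt) / (2(1−ρ_{x̄})²)`. -/
noncomputable def WbarFB (f : ℝ → ℝ) (lam x : ℝ) : ℝ :=
  lam * (∫ t in Set.Ioi (0:ℝ), (min t x) ^ 2 * f t) / (2 * (1 - rhoBar f lam x) ^ 2)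

/-- Residence-type component of the FB-1 mean response time of a size-`x` job,
`R̄_λ(x) = x/(1−ρ_{x̄})`. -/
noncomputable def RbarFB (f : ℝ → ℝ) (lam x : ℝ) : ℝ :=
  x / (1 - rhoBar f lam x)

/-- Overall FB-1 mean response time, `T̄^FB(λ) = ∫₀^∞ (W̄_λ(x)+R̄_λ(x)) f(x) dx`. -/
noncomputable def TfbMean (f : ℝ → ℝ) (lam : ℝ) : ℝ :=
  ∫ x in Set.Ioi (0:ℝ), (WbarFB f lam x + RbarFB f lam x) * f x

/-!
Write `A(x) = 1 - ρ_{x̄}` and `I = E[1 / A(S)²]`. Everything is compared with `I`.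

* By Cauchy-Schwarz, the mean residence satisfies `E[S / A(S)]² ≤ E[S²] * I`; the tail bound makes
  `E[S²]` finite.
* Both `x ↦ E[min(S, x)²]` and `1 / A²` are increasing, so Chebyshev's association inequality bounds
  the mean waiting below by `λ / 2 * β * I`, where `β > 0` does not depend on `λ`.
* `I → ∞` in heavy traffic: `I ≥ P(S > x) / A(x)²` for every `x`, the right-hand side tends to
  `m² * P(S > x) / E[(S - x)⁺]²`, and by Cauchy-Schwarz this is at least `m² / E[((S - x)⁺)²]`,
  which is arbitrarily large for suitable `x`.

Hence the ratio of residence to response time is at most of order `1 / √I`.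
-/

section General

open Set

variable {α : Type*} [MeasurableSpace α] {μ : Measure α} {f g : α → ℝ}

lemma sq_integral_mul_le_integral_sq_mul_integral_sq (hf : MemLp f 2 μ) (hg : MemLp g 2 μ) :
    (∫ a, f a * g a ∂μ) ^ 2 ≤ (∫ a, f a ^ 2 ∂μ) * ∫ a, g a ^ 2 ∂μ := by
  have quadratic_nonneg (r : ℝ) :
      0 ≤ (∫ a, f a ^ 2 ∂μ) * (r * r) + (2 * ∫ a, f a * g a ∂μ) * r + ∫ a, g a ^ 2 ∂μ := by
    have hff : Integrable (fun a => r ^ 2 * f a ^ 2) μ := hf.integrable_sq.const_mul _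
    have hfg : Integrable (fun a => 2 * r * (f a * g a)) μ := (hf.integrable_mul hg).const_mul _
    calc 0 ≤ ∫ a, (r * f a + g a) ^ 2 ∂μ := integral_nonneg fun a => sq_nonneg _
      _ = ∫ a, (r ^ 2 * f a ^ 2 + 2 * r * (f a * g a) + g a ^ 2) ∂μ := by congr with a; ring
      _ = _ := by
        have hgg := hg.integrable_sq
        rw [integral_add (by fun_prop) hgg, integral_add hff hfg, integral_const_mul,
          integral_const_mul]
        ring
  have hdiscrim := discrim_le_zero quadratic_nonneg
  rw [discrim] at hdiscrim
  linarith

/- Chebyshev's association inequality: integrate `(f a - f b) * (g a - g b) ≥ 0` over `a`, then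
over `b`. -/
lemma integral_mul_integral_le_of_monovaryOn [IsFiniteMeasure μ] {s : Set α}
    (hs : ∀ᵐ a ∂μ, a ∈ s) (hfg : MonovaryOn f g s) (hf : Integrable f μ) (hg : Integrable g μ)
    (hmul : Integrable (fun a => f a * g a) μ) :
    (∫ a, f a ∂μ) * ∫ a, g a ∂μ ≤ μ.real univ * ∫ a, f a * g a ∂μ := by
  have integral_over_first (b : α) : ∫ a, (f a - f b) * (g a - g b) ∂μ =
      ∫ a, f a * g a ∂μ - g b * ∫ a, f a ∂μ - f b * ∫ a, g a ∂μ + μ.real univ * (f b * g b) := by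
    have hexpand (a : α) : (f a - f b) * (g a - g b) =
        f a * g a - g b * f a - f b * g a + f b * g b := by ring
    simp_rw [hexpand]
    rw [integral_add, integral_sub, integral_sub, integral_const_mul, integral_const_mul,
      integral_const, smul_eq_mul]
    all_goals fun_prop
  have hnonneg : 0 ≤ ∫ b, (∫ a, (f a - f b) * (g a - g b) ∂μ) ∂μ := by
    refine integral_nonneg_of_ae (hs.mono fun b hb => ?_)
    refine integral_nonneg_of_ae (hs.mono fun a ha => ?_)
    exact hfg.sub_mul_sub_nonneg hb ha
  simp_rw [integral_over_first] at hnonneg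
  rw [integral_add, integral_sub, integral_sub, integral_mul_const, integral_mul_const,
    integral_const_mul, integral_const, smul_eq_mul] at hnonneg
  · linarith
  all_goals fun_prop

lemma integrable_rpow_of_measureReal_lt_le_rpow [IsFiniteMeasure μ] {p q K x₀ : ℝ}
    (hf : AEMeasurable f μ) (hf_nonneg : 0 ≤ᵐ[μ] f) (hp : 0 < p) (hpq : p < q) (hx₀ : 0 < x₀)
    (htail : ∀ t ≥ x₀, μ.real {a | t < f a} ≤ K * t ^ (-q)) :
    Integrable (fun a => f a ^ p) μ := by
  refine ⟨(hf.pow_const p).aestronglyMeasurable, ?_⟩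
  rw [hasFiniteIntegral_iff_ofReal (hf_nonneg.mono fun a ha => Real.rpow_nonneg ha p),
    lintegral_rpow_eq_lintegral_meas_lt_mul μ hf_nonneg hf hp,
    ← Ioc_union_Ioi_eq_Ioi hx₀.le]
  refine ENNReal.mul_lt_top ENNReal.ofReal_lt_top ((lintegral_union_le _ _ _).trans_lt
    (ENNReal.add_lt_top.2 ⟨?near_zero, ?tail⟩))
  case near_zero =>
    have hint : IntegrableOn (fun t : ℝ => μ.real univ * t ^ (p - 1)) (Ioc 0 x₀) :=
      ((intervalIntegrable_iff_integrableOn_Ioc_of_le hx₀.le).1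
        (intervalIntegral.intervalIntegrable_rpow' (by linarith))).const_mul _
    refine (setLIntegral_mono' measurableSet_Ioc fun t _ => ?_).trans_lt hint.lintegral_lt_top
    rw [ENNReal.ofReal_mul measureReal_nonneg, ofReal_measureReal]
    gcongr
    exact subset_univ _
  case tail =>
    have hint : IntegrableOn (fun t : ℝ => K * t ^ (p - 1 - q)) (Ioi x₀) :=
      (integrableOn_Ioi_rpow_of_lt (by linarith) hx₀).const_mul _
    refine (setLIntegral_mono' measurableSet_Ioi fun t ht => ?_).trans_lt hint.lintegral_lt_top
    have ht₀ : 0 < t := hx₀.trans ht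
    rw [← ofReal_measureReal, ← ENNReal.ofReal_mul measureReal_nonneg]
    refine ENNReal.ofReal_le_ofReal ?_
    calc μ.real {a | t < f a} * t ^ (p - 1) ≤ K * t ^ (-q) * t ^ (p - 1) := by
          gcongr
          exact htail t ht.le
      _ = K * t ^ (p - 1 - q) := by
          rw [mul_assoc, ← Real.rpow_add ht₀, neg_add_eq_sub]

lemma tendsto_div_add_zero_of_sq_le_mul {ι : Type*} {l : Filter ι} {R W I : ι → ℝ} {M k : ℝ}
    (hk : 0 < k) (hI : Tendsto I l atTop) (hR : ∀ᶠ i in l, 0 ≤ R i)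
    (hRI : ∀ᶠ i in l, R i ^ 2 ≤ M * I i) (hIW : ∀ᶠ i in l, k * I i ≤ W i) :
    Tendsto (fun i => R i / (W i + R i)) l (nhds 0) := by
  have hbound : Tendsto (fun i => √(M / k ^ 2 / I i)) l (nhds 0) := by
    simpa using (hI.const_div_atTop (M / k ^ 2)).sqrt
  refine squeeze_zero' ?_ ?_ hbound
  · filter_upwards [hR, hIW, hI.eventually_gt_atTop 0] with i hRi hWi hIi
    have : 0 ≤ W i := le_trans (by positivity) hWi
    positivity
  · filter_upwards [hR, hRI, hIW, hI.eventually_gt_atTop 0] with i hRi hRIi hWi hIi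
    calc R i / (W i + R i) ≤ R i / (k * I i) := by gcongr; linarith
      _ ≤ √(M / k ^ 2 / I i) := by
        refine Real.le_sqrt_of_sq_le ?_
        calc (R i / (k * I i)) ^ 2 ≤ M * I i / (k * I i) ^ 2 := by rw [div_pow]; gcongr
          _ = M / k ^ 2 / I i := by field_simp

end General

section ServiceLaw

open Set

/-- The limited expected value `E[min(S, x)]` of a service law `μ`; the paper's truncated load is
`ρ_{x̄} = λ * limitedMean μ x`. -/
noncomputable def limitedMean (μ : Measure ℝ) (x : ℝ) : ℝ :=
  ∫ t, min t x ∂μ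

/-- The limited second moment `E[min(S, x)²]` of a service law `μ`. -/
noncomputable def limitedSecondMoment (μ : Measure ℝ) (x : ℝ) : ℝ :=
  ∫ t, min t x ^ 2 ∂μ

/-- The second upper partial moment `E[((S - x)⁺)²]` of a service law `μ`; it controls how fast
`limitedMean μ x` approaches the mean. -/
noncomputable def excessSecondMoment (μ : Measure ℝ) (x : ℝ) : ℝ :=
  ∫ t, max (t - x) 0 ^ 2 ∂μ

/-- The capacity `1 - ρ_{x̄}` left over by the work that FB serves ahead of a size-`x` job. -/
noncomputable def residualCapacity (μ : Measure ℝ) (lam x : ℝ) : ℝ :=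
  1 - lam * limitedMean μ x

/-- The mean of the waiting-type component `W̄_λ(S)` for a service law `μ`. -/
noncomputable def meanWaiting (μ : Measure ℝ) (lam : ℝ) : ℝ :=
  ∫ x, lam * limitedSecondMoment μ x / (2 * residualCapacity μ lam x ^ 2) ∂μ

/-- The mean of the residence-type component `R̄_λ(S)` for a service law `μ`. -/
noncomputable def meanResidence (μ : Measure ℝ) (lam : ℝ) : ℝ :=
  ∫ x, x / residualCapacity μ lam x ∂μ

lemma abs_min_le_abs_left {t x : ℝ} (hx : 0 ≤ x) : |min t x| ≤ |t| := by
  rcases le_total t x with htx | hxt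
  · rw [min_eq_left htx]
  · rw [min_eq_right hxt]
    exact abs_le_abs_of_nonneg hx hxt

lemma abs_max_sub_zero_le_abs {t x : ℝ} (hx : 0 ≤ x) : |max (t - x) 0| ≤ |t| := by
  rw [abs_of_nonneg (le_max_right _ _)]
  exact max_le (by linarith [le_abs_self t]) (abs_nonneg t)

variable {μ : Measure ℝ} {lam x : ℝ}

section LimitedMean

variable [IsFiniteMeasure μ]

lemma integrable_min (hμ : Integrable (fun t => t) μ) : Integrable (fun t => min t x) μ :=
  hμ.inf (integrable_const x)

lemma monotone_limitedMean (hμ : Integrable (fun t => t) μ) : Monotone (limitedMean μ) :=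
  fun _ _ hxy => integral_mono (integrable_min hμ) (integrable_min hμ)
    fun t => min_le_min_left t hxy

lemma integral_sub_limitedMean (hμ : Integrable (fun t => t) μ) :
    ∫ t, t ∂μ - limitedMean μ x = ∫ t, max (t - x) 0 ∂μ := by
  rw [limitedMean, ← integral_sub hμ (integrable_min hμ)]
  congr with t
  rw [← max_sub_sub_left, sub_self, max_comm]

lemma limitedMean_le_integral (hμ : Integrable (fun t => t) μ) :
    limitedMean μ x ≤ ∫ t, t ∂μ := by
  rw [← sub_nonneg, integral_sub_limitedMean hμ]
  exact integral_nonneg fun t => le_max_right _ _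

lemma antitone_residualCapacity (hμ : Integrable (fun t => t) μ) (hlam : 0 ≤ lam) :
    Antitone (residualCapacity μ lam) :=
  fun _ _ hxy =>
    sub_le_sub_left (mul_le_mul_of_nonneg_left (monotone_limitedMean hμ hxy) hlam) 1

lemma one_sub_load_le_residualCapacity (hμ : Integrable (fun t => t) μ) (hlam : 0 ≤ lam) :
    1 - lam * ∫ t, t ∂μ ≤ residualCapacity μ lam x :=
  sub_le_sub_left (mul_le_mul_of_nonneg_left (limitedMean_le_integral hμ) hlam) 1

lemma residualCapacity_pos (hμ : Integrable (fun t => t) μ) (hlam : 0 ≤ lam)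
    (hload : lam * ∫ t, t ∂μ < 1) : 0 < residualCapacity μ lam x :=
  (sub_pos.2 hload).trans_le (one_sub_load_le_residualCapacity hμ hlam)

lemma monotone_inv_residualCapacity_sq (hμ : Integrable (fun t => t) μ) (hlam : 0 ≤ lam)
    (hload : lam * ∫ t, t ∂μ < 1) : Monotone fun x => (residualCapacity μ lam x)⁻¹ ^ 2 := by
  intro x y hxy
  have hx : 0 < residualCapacity μ lam x := residualCapacity_pos hμ hlam hload
  have hy : 0 < residualCapacity μ lam y := residualCapacity_pos hμ hlam hload
  have hyx := antitone_residualCapacity hμ hlam hxy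
  dsimp only
  gcongr

lemma memLp_inv_residualCapacity (hμ : Integrable (fun t => t) μ) (hlam : 0 ≤ lam)
    (hload : lam * ∫ t, t ∂μ < 1) : MemLp (fun x => (residualCapacity μ lam x)⁻¹) 2 μ := by
  have hmeas : Measurable fun x => (residualCapacity μ lam x)⁻¹ :=
    (antitone_residualCapacity hμ hlam).measurable.inv
  refine MemLp.of_bound hmeas.aestronglyMeasurable (1 - lam * ∫ t, t ∂μ)⁻¹ (.of_forall fun x => ?_)
  have hx : 0 < residualCapacity μ lam x := residualCapacity_pos hμ hlam hload
  have : 0 < 1 - lam * ∫ t, t ∂μ := sub_pos.2 hload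
  rw [Real.norm_of_nonneg (by positivity)]
  gcongr
  exact one_sub_load_le_residualCapacity hμ hlam

end LimitedMean

section LimitedSecondMoment

lemma integrable_min_sq [IsFiniteMeasure μ] (hμ : MemLp (fun t => t) 2 μ) :
    Integrable (fun t => min t x ^ 2) μ :=
  (hμ.inf (memLp_const x)).integrable_sq

lemma limitedSecondMoment_nonneg : 0 ≤ limitedSecondMoment μ x :=
  integral_nonneg fun _ => sq_nonneg _

lemma limitedSecondMoment_le_integral_sq [IsFiniteMeasure μ] (hμ : MemLp (fun t => t) 2 μ)
    (hx : 0 ≤ x) : limitedSecondMoment μ x ≤ ∫ t, t ^ 2 ∂μ :=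
  integral_mono (integrable_min_sq hμ) hμ.integrable_sq fun _ => sq_le_sq.2 (abs_min_le_abs_left hx)

lemma monotoneOn_limitedSecondMoment [IsFiniteMeasure μ] (hμ : MemLp (fun t => t) 2 μ)
    (hnonneg : ∀ᵐ t ∂μ, 0 ≤ t) : MonotoneOn (limitedSecondMoment μ) (Ici 0) := by
  intro x hx y _ hxy
  refine integral_mono_ae (integrable_min_sq hμ) (integrable_min_sq hμ) ?_
  filter_upwards [hnonneg] with t ht
  exact pow_le_pow_left₀ (le_min ht hx) (min_le_min_left t hxy) 2

lemma stronglyMeasurable_limitedSecondMoment [SFinite μ] :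
    StronglyMeasurable (limitedSecondMoment μ) :=
  StronglyMeasurable.integral_prod_right (f := fun x t => min t x ^ 2)
    (Measurable.stronglyMeasurable (by fun_prop))

lemma ae_norm_limitedSecondMoment_le [IsFiniteMeasure μ] (hμ : MemLp (fun t => t) 2 μ)
    (hnonneg : ∀ᵐ t ∂μ, 0 ≤ t) :
    ∀ᵐ x ∂μ, ‖limitedSecondMoment μ x‖ ≤ ∫ t, t ^ 2 ∂μ := by
  filter_upwards [hnonneg] with x hx
  rw [Real.norm_of_nonneg limitedSecondMoment_nonneg]
  exact limitedSecondMoment_le_integral_sq hμ hx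

lemma integrable_limitedSecondMoment [IsFiniteMeasure μ] (hμ : MemLp (fun t => t) 2 μ)
    (hnonneg : ∀ᵐ t ∂μ, 0 ≤ t) : Integrable (limitedSecondMoment μ) μ :=
  .of_bound stronglyMeasurable_limitedSecondMoment.aestronglyMeasurable _
    (ae_norm_limitedSecondMoment_le hμ hnonneg)

lemma limitedSecondMoment_pos [IsFiniteMeasure μ] (hμ : MemLp (fun t => t) 2 μ)
    (hmean : ∫ t, t ∂μ ≠ 0) (hx : 0 < x) : 0 < limitedSecondMoment μ x := by
  refine limitedSecondMoment_nonneg.lt_of_ne' fun hzero => hmean ?_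
  have hmin : ∀ᵐ t ∂μ, min t x ^ 2 = 0 :=
    (integral_eq_zero_iff_of_nonneg (fun _ => sq_nonneg _) (integrable_min_sq hμ)).1 hzero
  refine integral_eq_zero_of_ae (hmin.mono fun t ht => ?_)
  rcases min_choice t x with hmin_eq | hmin_eq <;> rw [hmin_eq, sq_eq_zero_iff] at ht
  · exact ht
  · exact absurd ht hx.ne'

lemma integral_limitedSecondMoment_pos [IsFiniteMeasure μ] (hμ : MemLp (fun t => t) 2 μ)
    (hnonneg : ∀ᵐ t ∂μ, 0 ≤ t) (hmean : ∫ t, t ∂μ ≠ 0) :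
    0 < ∫ x, limitedSecondMoment μ x ∂μ := by
  refine (integral_nonneg fun _ => limitedSecondMoment_nonneg).lt_of_ne' fun hzero => hmean ?_
  have hae : ∀ᵐ x ∂μ, limitedSecondMoment μ x = 0 :=
    (integral_eq_zero_iff_of_nonneg (fun _ => limitedSecondMoment_nonneg)
      (integrable_limitedSecondMoment hμ hnonneg)).1 hzero
  refine integral_eq_zero_of_ae ?_
  filter_upwards [hnonneg, hae] with x hx hx_zero
  exact (hx.eq_or_lt.resolve_right fun hx_pos =>
    (limitedSecondMoment_pos hμ hmean hx_pos).ne' hx_zero).symm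

end LimitedSecondMoment

section Excess

lemma continuousOn_excessSecondMoment (hμ : MemLp (fun t => t) 2 μ) :
    ContinuousOn (excessSecondMoment μ) (Ici 0) := by
  refine continuousOn_of_dominated (fun x _ => by fun_prop) (fun x hx => .of_forall fun t => ?_)
    hμ.integrable_sq (.of_forall fun t => by fun_prop)
  rw [Real.norm_of_nonneg (sq_nonneg _)]
  exact sq_le_sq.2 (abs_max_sub_zero_le_abs hx)

lemma tendsto_excessSecondMoment_atTop (hμ : MemLp (fun t => t) 2 μ) :
    Tendsto (excessSecondMoment μ) atTop (nhds 0) := by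
  rw [← integral_zero ℝ ℝ (μ := μ)]
  refine tendsto_integral_filter_of_dominated_convergence (fun t => t ^ 2)
    (.of_forall fun x => by fun_prop) ?_ hμ.integrable_sq (.of_forall fun t => ?_)
  · filter_upwards [eventually_ge_atTop 0] with x hx
    refine .of_forall fun t => ?_
    rw [Real.norm_of_nonneg (sq_nonneg _)]
    exact sq_le_sq.2 (abs_max_sub_zero_le_abs hx)
  · refine tendsto_const_nhds.congr' ?_
    filter_upwards [eventually_ge_atTop t] with x hx
    rw [max_eq_right (sub_nonpos.2 hx), zero_pow two_ne_zero]

lemma exists_excessSecondMoment_eq (hμ : MemLp (fun t => t) 2 μ) {δ : ℝ}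
    (hδ : δ ∈ Ioc 0 (excessSecondMoment μ 0)) : ∃ x, excessSecondMoment μ x = δ := by
  obtain ⟨x, -, hx⟩ := isPreconnected_Ici.intermediate_value_Ioc self_mem_Ici
    (le_principal_iff.2 (Ici_mem_atTop 0)) (continuousOn_excessSecondMoment hμ)
    (tendsto_excessSecondMoment_atTop hμ) hδ
  exact ⟨x, hx⟩

lemma max_sub_zero_eq_zero_of_notMem_Ioi {t : ℝ} (ht : t ∉ Ioi x) : max (t - x) 0 = 0 :=
  max_eq_right (sub_nonpos.2 (notMem_Ioi.1 ht))

lemma measureReal_Ioi_pos_of_excessSecondMoment_pos [IsFiniteMeasure μ]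
    (hx : 0 < excessSecondMoment μ x) : 0 < μ.real (Ioi x) := by
  refine measureReal_nonneg.lt_of_ne' fun hzero => hx.ne' ?_
  have hle : ∀ᵐ t ∂μ, t ∉ Ioi x :=
    measure_eq_zero_iff_ae_notMem.1 ((measureReal_eq_zero_iff).1 hzero)
  refine integral_eq_zero_of_ae (hle.mono fun t ht => ?_)
  simp [max_sub_zero_eq_zero_of_notMem_Ioi ht]

lemma sq_integral_sub_limitedMean_le [IsFiniteMeasure μ] (hμ : MemLp (fun t => t) 2 μ) :
    (∫ t, t ∂μ - limitedMean μ x) ^ 2 ≤ excessSecondMoment μ x * μ.real (Ioi x) := by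
  have hexcess : MemLp (fun t => max (t - x) 0) 2 μ := (hμ.sub (memLp_const x)).sup (memLp_const 0)
  have hcs := sq_integral_mul_le_integral_sq_mul_integral_sq (hexcess.restrict (Ioi x))
    (memLp_const 1)
  simp only [mul_one, one_pow, integral_const, measureReal_restrict_apply_univ, smul_eq_mul] at hcs
  rwa [setIntegral_eq_integral_of_forall_compl_eq_zero
      fun t ht => max_sub_zero_eq_zero_of_notMem_Ioi ht,
    setIntegral_eq_integral_of_forall_compl_eq_zero
      fun t ht => by rw [max_sub_zero_eq_zero_of_notMem_Ioi ht, zero_pow two_ne_zero],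
    ← integral_sub_limitedMean (hμ.integrable one_le_two)] at hcs

lemma excessSecondMoment_zero_pos [IsFiniteMeasure μ] (hμ : MemLp (fun t => t) 2 μ)
    (hmean : 0 < ∫ t, t ∂μ) : 0 < excessSecondMoment μ 0 := by
  have hlimited : limitedMean μ 0 ≤ 0 := integral_nonpos fun t => min_le_right t 0
  have hgap : 0 < ∫ t, t ∂μ - limitedMean μ 0 := by linarith
  exact pos_of_mul_pos_left ((pow_pos hgap 2).trans_le (sq_integral_sub_limitedMean_le hμ))
    measureReal_nonneg

end Excess

section HeavyTraffic

lemma eventually_pos_and_load_lt_one {m : ℝ} (hm : 0 < m) :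
    ∀ᶠ lam in nhdsWithin (1 / m) (Iio (1 / m)), 0 < lam ∧ lam * m < 1 := by
  filter_upwards [Ioo_mem_nhdsLT (one_div_pos.2 hm)] with lam hlam
  exact ⟨hlam.1, (lt_div_iff₀ hm).1 hlam.2⟩

lemma tendsto_residualCapacity (hmean : ∫ t, t ∂μ ≠ 0) :
    Tendsto (fun lam => residualCapacity μ lam x) (nhds (1 / ∫ t, t ∂μ))
      (nhds ((∫ t, t ∂μ - limitedMean μ x) / ∫ t, t ∂μ)) := by
  have hcont : Continuous fun lam => residualCapacity μ lam x := by
    unfold residualCapacity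
    fun_prop
  convert hcont.tendsto (1 / ∫ t, t ∂μ) using 2
  rw [residualCapacity, sub_div, div_self hmean, one_div_mul_eq_div]

lemma waiting_eq : lam * limitedSecondMoment μ x / (2 * residualCapacity μ lam x ^ 2) =
    lam / 2 * (limitedSecondMoment μ x * (residualCapacity μ lam x)⁻¹ ^ 2) := by
  rw [inv_pow]
  ring

variable [IsFiniteMeasure μ]

lemma inv_residualCapacity_sq_mul_measureReal_Ioi_le (hμ : Integrable (fun t => t) μ)
    (hlam : 0 ≤ lam) (hload : lam * ∫ t, t ∂μ < 1) :
    (residualCapacity μ lam x)⁻¹ ^ 2 * μ.real (Ioi x) ≤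
      ∫ y, (residualCapacity μ lam y)⁻¹ ^ 2 ∂μ := by
  have hint := (memLp_inv_residualCapacity hμ hlam hload).integrable_sq
  refine le_trans ?_ (mul_meas_ge_le_integral_of_nonneg (.of_forall fun y => sq_nonneg _) hint
    ((residualCapacity μ lam x)⁻¹ ^ 2))
  refine mul_le_mul_of_nonneg_left (measureReal_mono fun y hy => ?_) (sq_nonneg _)
  exact monotone_inv_residualCapacity_sq hμ hlam hload (le_of_lt hy)

/- The intermediate value theorem makes `E[((S - x)⁺)²]` small but nonzero, so that bounded and
atomic service laws need no separate treatment. -/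
lemma exists_sq_integral_sub_limitedMean_lt (hμ : MemLp (fun t => t) 2 μ) (hmean : 0 < ∫ t, t ∂μ)
    {c : ℝ} (hc : 0 < c) :
    ∃ x, (∫ t, t ∂μ - limitedMean μ x) ^ 2 < c * μ.real (Ioi x) := by
  have hzero := excessSecondMoment_zero_pos hμ hmean
  obtain ⟨x, hx⟩ := exists_excessSecondMoment_eq hμ
    (δ := min (c / 2) (excessSecondMoment μ 0)) ⟨by positivity, min_le_right _ _⟩
  have hx_pos : 0 < excessSecondMoment μ x := hx ▸ by positivity
  have hx_lt : excessSecondMoment μ x < c :=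
    hx ▸ (min_le_left _ _).trans_lt (half_lt_self hc)
  have htail := measureReal_Ioi_pos_of_excessSecondMoment_pos hx_pos
  exact ⟨x, (sq_integral_sub_limitedMean_le hμ).trans_lt (by gcongr)⟩

lemma tendsto_integral_inv_residualCapacity_sq_atTop (hμ : MemLp (fun t => t) 2 μ)
    (hmean : 0 < ∫ t, t ∂μ) :
    Tendsto (fun lam => ∫ x, (residualCapacity μ lam x)⁻¹ ^ 2 ∂μ)
      (nhdsWithin (1 / ∫ t, t ∂μ) (Iio (1 / ∫ t, t ∂μ))) atTop := by
  have hμ₁ : Integrable (fun t => t) μ := hμ.integrable one_le_two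
  refine tendsto_atTop.2 fun N => ?_
  set N' := max N 1
  have hN' : 0 < N' := lt_max_of_lt_right one_pos
  obtain ⟨x, hx⟩ := exists_sq_integral_sub_limitedMean_lt hμ hmean
    (c := (∫ t, t ∂μ) ^ 2 / N') (by positivity)
  have hlimit : ((∫ t, t ∂μ - limitedMean μ x) / ∫ t, t ∂μ) ^ 2 < μ.real (Ioi x) / N' := by
    rw [div_pow, div_lt_iff₀ (by positivity)]
    exact hx.trans_eq (by ring)
  have hcapacity := ((tendsto_residualCapacity hmean.ne').pow 2).mono_left
    (nhdsWithin_le_nhds (s := Iio (1 / ∫ t, t ∂μ))) |>.eventually_lt_const hlimit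
  filter_upwards [eventually_pos_and_load_lt_one hmean, hcapacity] with lam ⟨hlam, hload⟩ hlt
  have hpos : 0 < residualCapacity μ lam x := residualCapacity_pos hμ₁ hlam.le hload
  calc N ≤ N' := le_max_left _ _
    _ ≤ (residualCapacity μ lam x)⁻¹ ^ 2 * μ.real (Ioi x) := by
      rw [inv_pow, inv_mul_eq_div, le_div_iff₀ (by positivity)]
      exact ((lt_div_iff₀' hN').1 hlt).le
    _ ≤ ∫ y, (residualCapacity μ lam y)⁻¹ ^ 2 ∂μ :=
      inv_residualCapacity_sq_mul_measureReal_Ioi_le hμ₁ hlam.le hload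

lemma integrable_residence (hμ : MemLp (fun t => t) 2 μ) (hlam : 0 ≤ lam)
    (hload : lam * ∫ t, t ∂μ < 1) : Integrable (fun x => x / residualCapacity μ lam x) μ := by
  simp_rw [div_eq_mul_inv]
  exact hμ.integrable_mul (memLp_inv_residualCapacity (hμ.integrable one_le_two) hlam hload)

lemma meanResidence_nonneg (hμ : Integrable (fun t => t) μ) (hnonneg : ∀ᵐ t ∂μ, 0 ≤ t)
    (hlam : 0 ≤ lam) (hload : lam * ∫ t, t ∂μ < 1) : 0 ≤ meanResidence μ lam :=
  integral_nonneg_of_ae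
    (hnonneg.mono fun _ hx => div_nonneg hx (residualCapacity_pos hμ hlam hload).le)

lemma meanResidence_sq_le (hμ : MemLp (fun t => t) 2 μ) (hlam : 0 ≤ lam)
    (hload : lam * ∫ t, t ∂μ < 1) :
    meanResidence μ lam ^ 2 ≤ (∫ t, t ^ 2 ∂μ) * ∫ x, (residualCapacity μ lam x)⁻¹ ^ 2 ∂μ := by
  simp_rw [meanResidence, div_eq_mul_inv]
  exact sq_integral_mul_le_integral_sq_mul_integral_sq hμ
    (memLp_inv_residualCapacity (hμ.integrable one_le_two) hlam hload)

lemma integrable_limitedSecondMoment_mul_inv_residualCapacity_sq (hμ : MemLp (fun t => t) 2 μ)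
    (hnonneg : ∀ᵐ t ∂μ, 0 ≤ t) (hlam : 0 ≤ lam) (hload : lam * ∫ t, t ∂μ < 1) :
    Integrable (fun x => limitedSecondMoment μ x * (residualCapacity μ lam x)⁻¹ ^ 2) μ :=
  (memLp_inv_residualCapacity (hμ.integrable one_le_two) hlam hload).integrable_sq.bdd_mul
    stronglyMeasurable_limitedSecondMoment.aestronglyMeasurable
    (ae_norm_limitedSecondMoment_le hμ hnonneg)

lemma integrable_waiting (hμ : MemLp (fun t => t) 2 μ) (hnonneg : ∀ᵐ t ∂μ, 0 ≤ t)
    (hlam : 0 ≤ lam) (hload : lam * ∫ t, t ∂μ < 1) :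
    Integrable (fun x => lam * limitedSecondMoment μ x / (2 * residualCapacity μ lam x ^ 2)) μ := by
  simp_rw [waiting_eq]
  exact (integrable_limitedSecondMoment_mul_inv_residualCapacity_sq hμ hnonneg hlam
    hload).const_mul _

lemma integral_limitedSecondMoment_mul_le_meanWaiting (hμ : MemLp (fun t => t) 2 μ)
    (hnonneg : ∀ᵐ t ∂μ, 0 ≤ t) (hlam : 0 ≤ lam) (hload : lam * ∫ t, t ∂μ < 1) :
    lam / 2 * ((∫ x, limitedSecondMoment μ x ∂μ) * ∫ x, (residualCapacity μ lam x)⁻¹ ^ 2 ∂μ) ≤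
      μ.real univ * meanWaiting μ lam := by
  have hμ₁ : Integrable (fun t => t) μ := hμ.integrable one_le_two
  have hmonovary : MonovaryOn (limitedSecondMoment μ)
      (fun x => (residualCapacity μ lam x)⁻¹ ^ 2) (Ici 0) :=
    (monotoneOn_limitedSecondMoment hμ hnonneg).monovaryOn
      ((monotone_inv_residualCapacity_sq hμ₁ hlam hload).monotoneOn _)
  have hchebyshev := integral_mul_integral_le_of_monovaryOn hnonneg hmonovary
    (integrable_limitedSecondMoment hμ hnonneg)
    (memLp_inv_residualCapacity hμ₁ hlam hload).integrable_sq
    (integrable_limitedSecondMoment_mul_inv_residualCapacity_sq hμ hnonneg hlam hload)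
  simp_rw [meanWaiting, waiting_eq, integral_const_mul, mul_left_comm (μ.real univ)]
  gcongr

theorem tendsto_meanResidence_div_meanResponse (hμ : MemLp (fun t => t) 2 μ)
    (hnonneg : ∀ᵐ t ∂μ, 0 ≤ t) (hmean : 0 < ∫ t, t ∂μ) :
    Tendsto (fun lam => meanResidence μ lam / (meanWaiting μ lam + meanResidence μ lam))
      (nhdsWithin (1 / ∫ t, t ∂μ) (Iio (1 / ∫ t, t ∂μ))) (nhds 0) := by
  have hμ₁ : Integrable (fun t => t) μ := hμ.integrable one_le_two
  have hmass : 0 < μ.real univ := by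
    have : NeZero μ := ⟨fun hzero => hmean.ne' (by rw [hzero, integral_zero_measure])⟩
    exact measureReal_univ_pos
  have hsecond := integral_limitedSecondMoment_pos hμ hnonneg hmean.ne'
  have hstable := eventually_pos_and_load_lt_one hmean
  have hrate : ∀ᶠ lam in nhdsWithin (1 / ∫ t, t ∂μ) (Iio (1 / ∫ t, t ∂μ)),
      1 / (∫ t, t ∂μ) / 2 < lam :=
    mem_of_superset (Ioo_mem_nhdsLT (half_lt_self (one_div_pos.2 hmean))) fun _ hlam => hlam.1
  refine tendsto_div_add_zero_of_sq_le_mul (M := ∫ t, t ^ 2 ∂μ)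
    (k := 1 / (∫ t, t ∂μ) / 2 / 2 * (∫ x, limitedSecondMoment μ x ∂μ) / μ.real univ)
    (by positivity) (tendsto_integral_inv_residualCapacity_sq_atTop hμ hmean) ?_ ?_ ?_
  · exact hstable.mono fun lam ⟨hlam, hload⟩ => meanResidence_nonneg hμ₁ hnonneg hlam.le hload
  · exact hstable.mono fun lam ⟨hlam, hload⟩ => meanResidence_sq_le hμ hlam.le hload
  · filter_upwards [hstable, hrate] with lam ⟨hlam, hload⟩ hlam_gt
    have : 0 ≤ ∫ x, (residualCapacity μ lam x)⁻¹ ^ 2 ∂μ := integral_nonneg fun _ => sq_nonneg _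
    rw [div_mul_eq_mul_div, div_le_iff₀' hmass, mul_assoc]
    refine le_trans ?_
      (integral_limitedSecondMoment_mul_le_meanWaiting hμ hnonneg hlam.le hload)
    gcongr

end HeavyTraffic

end ServiceLaw

section Density

open Set

/-- The law on `(0, ∞)` with density `f`; it lets statements about an arbitrary service law be read
as statements about densities. Negative values of `f` are truncated to `0`. -/
noncomputable def serviceLaw (f : ℝ → ℝ) : Measure ℝ :=
  (volume.restrict (Ioi 0)).withDensity fun t => ENNReal.ofReal (f t)

variable {f : ℝ → ℝ} {lam x : ℝ}

lemma isFiniteMeasure_serviceLaw (hf : IntegrableOn f (Ioi 0)) :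
    IsFiniteMeasure (serviceLaw f) :=
  isFiniteMeasure_withDensity_ofReal hf.2

lemma ae_pos_serviceLaw : ∀ᵐ t ∂serviceLaw f, 0 < t :=
  (withDensity_absolutelyContinuous _ _).ae_le (ae_restrict_mem measurableSet_Ioi)

lemma integral_serviceLaw (hf : IntegrableOn f (Ioi 0))
    (hf_nonneg : ∀ᵐ t ∂volume.restrict (Ioi 0), 0 ≤ f t) (g : ℝ → ℝ) :
    ∫ t, g t ∂serviceLaw f = ∫ t in Ioi 0, g t * f t := by
  rw [serviceLaw, integral_withDensity_eq_integral_toReal_smul₀ hf.aemeasurable.ennreal_ofReal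
    (.of_forall fun _ => ENNReal.ofReal_lt_top)]
  refine integral_congr_ae (hf_nonneg.mono fun t ht => ?_)
  simp only [ENNReal.toReal_ofReal ht, smul_eq_mul, mul_comm]

lemma integrable_serviceLaw_iff (hf : IntegrableOn f (Ioi 0))
    (hf_nonneg : ∀ᵐ t ∂volume.restrict (Ioi 0), 0 ≤ f t) {g : ℝ → ℝ} :
    Integrable g (serviceLaw f) ↔ IntegrableOn (fun t => g t * f t) (Ioi 0) := by
  rw [serviceLaw, integrable_withDensity_iff_integrable_smul₀' hf.aemeasurable.ennreal_ofReal
    (.of_forall fun _ => ENNReal.ofReal_lt_top)]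
  refine integrable_congr (hf_nonneg.mono fun t ht => ?_)
  simp only [ENNReal.toReal_ofReal ht, smul_eq_mul, mul_comm]

lemma measureReal_serviceLaw_Ioi (hf : IntegrableOn f (Ioi 0))
    (hf_nonneg : ∀ᵐ t ∂volume.restrict (Ioi 0), 0 ≤ f t) (hx : 0 ≤ x) :
    (serviceLaw f).real (Ioi x) = tailS f x := by
  rw [← integral_indicator_one measurableSet_Ioi, integral_serviceLaw hf hf_nonneg]
  simp only [← indicator_mul_left, Pi.one_apply, one_mul]
  rw [setIntegral_indicator measurableSet_Ioi, Ioi_inter_Ioi, sup_eq_right.2 hx, tailS]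

lemma one_sub_rhoBar_eq_residualCapacity (hf : IntegrableOn f (Ioi 0))
    (hf_nonneg : ∀ᵐ t ∂volume.restrict (Ioi 0), 0 ≤ f t) :
    1 - rhoBar f lam x = residualCapacity (serviceLaw f) lam x := by
  rw [residualCapacity, limitedMean, integral_serviceLaw hf hf_nonneg, rhoBar]

lemma setIntegral_RbarFB_mul (hf : IntegrableOn f (Ioi 0))
    (hf_nonneg : ∀ᵐ t ∂volume.restrict (Ioi 0), 0 ≤ f t) :
    ∫ x in Ioi 0, RbarFB f lam x * f x = meanResidence (serviceLaw f) lam := by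
  simp_rw [RbarFB, one_sub_rhoBar_eq_residualCapacity hf hf_nonneg, meanResidence,
    integral_serviceLaw hf hf_nonneg]

lemma WbarFB_eq (hf : IntegrableOn f (Ioi 0))
    (hf_nonneg : ∀ᵐ t ∂volume.restrict (Ioi 0), 0 ≤ f t) :
    WbarFB f lam x = lam * limitedSecondMoment (serviceLaw f) x /
      (2 * residualCapacity (serviceLaw f) lam x ^ 2) := by
  rw [WbarFB, one_sub_rhoBar_eq_residualCapacity hf hf_nonneg, limitedSecondMoment,
    integral_serviceLaw hf hf_nonneg]

lemma memLp_two_serviceLaw (hf : IntegrableOn f (Ioi 0))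
    (hf_nonneg : ∀ᵐ t ∂volume.restrict (Ioi 0), 0 ≤ f t)
    (hsecond : IntegrableOn (fun t => t ^ 2 * f t) (Ioi 0)) :
    MemLp (fun t => t) 2 (serviceLaw f) :=
  (memLp_two_iff_integrable_sq aestronglyMeasurable_id).2
    ((integrable_serviceLaw_iff hf hf_nonneg).2 hsecond)

lemma TfbMean_eq (hf : IntegrableOn f (Ioi 0))
    (hf_nonneg : ∀ᵐ t ∂volume.restrict (Ioi 0), 0 ≤ f t)
    (hsecond : IntegrableOn (fun t => t ^ 2 * f t) (Ioi 0)) (hlam : 0 ≤ lam)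
    (hload : lam * ∫ t, t ∂serviceLaw f < 1) :
    TfbMean f lam = meanWaiting (serviceLaw f) lam + meanResidence (serviceLaw f) lam := by
  have := isFiniteMeasure_serviceLaw hf
  have hμ := memLp_two_serviceLaw hf hf_nonneg hsecond
  have hnonneg : ∀ᵐ t ∂serviceLaw f, 0 ≤ t := ae_pos_serviceLaw.mono fun _ => le_of_lt
  rw [TfbMean, ← integral_serviceLaw hf hf_nonneg]
  simp_rw [WbarFB_eq hf hf_nonneg, RbarFB, one_sub_rhoBar_eq_residualCapacity hf hf_nonneg]
  exact integral_add (integrable_waiting hμ hnonneg hlam hload)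
    (integrable_residence hμ hlam hload)

lemma integrableOn_rpow_mul_of_tailS_le (hf : IntegrableOn f (Ioi 0))
    (hf_nonneg : ∀ᵐ t ∂volume.restrict (Ioi 0), 0 ≤ f t) {p q K x₀ : ℝ}
    (hp : 0 < p) (hpq : p < q) (hx₀ : 0 < x₀)
    (htail : ∀ γ ≥ 1, tailS f (γ * x₀) ≤ K * γ ^ (-q)) :
    IntegrableOn (fun t => t ^ p * f t) (Ioi 0) := by
  have := isFiniteMeasure_serviceLaw hf
  have hnonneg : ∀ᵐ t ∂serviceLaw f, 0 ≤ t := ae_pos_serviceLaw.mono fun _ => le_of_lt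
  refine (integrable_serviceLaw_iff hf hf_nonneg).1 (integrable_rpow_of_measureReal_lt_le_rpow
    (K := K / x₀ ^ (-q)) aemeasurable_id hnonneg hp hpq hx₀ fun t ht => ?_)
  have ht₀ : 0 ≤ t := hx₀.le.trans ht
  calc (serviceLaw f).real (Ioi t) = tailS f (t / x₀ * x₀) := by
        rw [measureReal_serviceLaw_Ioi hf hf_nonneg ht₀, div_mul_cancel₀ t hx₀.ne']
    _ ≤ K * (t / x₀) ^ (-q) := htail _ ((one_le_div hx₀).2 ht)
    _ = K / x₀ ^ (-q) * t ^ (-q) := by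
        rw [Real.div_rpow ht₀ hx₀.le, mul_div_assoc', mul_div_right_comm]

lemma integral_id_serviceLaw_pos (hf : IntegrableOn f (Ioi 0))
    (hf_nonneg : ∀ᵐ t ∂volume.restrict (Ioi 0), 0 ≤ f t)
    (hf_ne : ∫ t in Ioi 0, f t ≠ 0) (hint : Integrable (fun t => t) (serviceLaw f)) :
    0 < ∫ t, t ∂serviceLaw f := by
  have hnonneg : ∀ᵐ t ∂serviceLaw f, 0 ≤ t := ae_pos_serviceLaw.mono fun _ => le_of_lt
  refine (integral_nonneg_of_ae hnonneg).lt_of_ne' fun hzero => hf_ne ?_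
  have hae := (integral_eq_zero_iff_of_nonneg_ae hnonneg hint).1 hzero
  have hfalse : ∀ᵐ _ ∂serviceLaw f, False := by
    filter_upwards [ae_pos_serviceLaw, hae] with t ht ht_zero using ht.ne' ht_zero
  have hlaw : serviceLaw f = 0 := ae_eq_bot.1 (eventually_false_iff_eq_bot.1 hfalse)
  simpa [hlaw] using (integral_serviceLaw hf hf_nonneg 1).symm

end Density

theorem fb_residence_negligible_general (f : ℝ → ℝ) (m : ℝ)
    (hf_nonneg : ∀ᵐ x ∂volume.restrict (Set.Ioi 0), 0 ≤ f x)
    (hf_prob : ∫ t in Set.Ioi (0 : ℝ), f t = 1)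
    (hsecond : IntegrableOn (fun t => t ^ 2 * f t) (Set.Ioi 0))
    (hm_def : m = ∫ t in Set.Ioi (0 : ℝ), t * f t) :
    Tendsto (fun lam => (∫ x in Set.Ioi (0 : ℝ), RbarFB f lam x * f x) / TfbMean f lam)
      (nhdsWithin (1 / m) (Set.Iio (1 / m))) (nhds 0) := by
  have hf : IntegrableOn f (Set.Ioi 0) := .of_integral_ne_zero (hf_prob ▸ one_ne_zero)
  have := isFiniteMeasure_serviceLaw hf
  have hμ := memLp_two_serviceLaw hf hf_nonneg hsecond
  have hmean := integral_id_serviceLaw_pos hf hf_nonneg (hf_prob ▸ one_ne_zero)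
    (hμ.integrable one_le_two)
  rw [hm_def, ← integral_serviceLaw hf hf_nonneg]
  refine (tendsto_meanResidence_div_meanResponse hμ (ae_pos_serviceLaw.mono fun _ => le_of_lt)
    hmean).congr' ?_
  filter_upwards [eventually_pos_and_load_lt_one hmean] with lam ⟨hlam, hload⟩
  rw [setIntegral_RbarFB_mul hf hf_nonneg, TfbMean_eq hf hf_nonneg hsecond hlam.le hload]

/-- **Lemma 6.11.** If `S` is unbounded with tail of upper Matuszewska index
less than `−2` (Potter-type bound), then the residence-type component of the
FB mean response time is negligible in heavy traffic:
`lim_{λ → (1/m)⁻} (∫₀^∞ R̄_λ(x) f(x) dx) / T̄^FB(λ) = 0`. -/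
theorem fb_residence_negligible
    (f : ℝ → ℝ) (m : ℝ)
    (hf_meas : Measurable f)
    (hf_nonneg : ∀ x, 0 ≤ f x)
    (hf_zero : ∀ x ≤ 0, f x = 0)
    (hf_prob : ∫ t in Set.Ioi (0:ℝ), f t = 1)
    (hm_int : Integrable (fun t => t * f t) (volume.restrict (Set.Ioi 0)))
    (hm_def : m = ∫ t in Set.Ioi (0:ℝ), t * f t)
    (hm_pos : 0 < m)
    (hunbounded : ∀ x > (0:ℝ), 0 < tailS f x)
    (hmatuszewska : ∃ C > (0:ℝ), ∃ ε > (0:ℝ), ∃ x₀ > (0:ℝ),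
      ∀ x ≥ x₀, ∀ γ ≥ (1:ℝ), tailS f (γ * x) ≤ C * γ ^ (-(2 + ε)) * tailS f x) :
    Tendsto (fun lam => (∫ x in Set.Ioi (0:ℝ), RbarFB f lam x * f x) / TfbMean f lam)
      (nhdsWithin (1/m) (Set.Iio (1/m))) (nhds 0) := by
  obtain ⟨C, -, ε, hε, x₀, hx₀, hpotter⟩ := hmatuszewska
  have hsecond : IntegrableOn (fun t => t ^ 2 * f t) (Set.Ioi 0) := by
    simpa only [Real.rpow_two] using integrableOn_rpow_mul_of_tailS_le (q := 2 + ε)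
      (K := C * tailS f x₀) (.of_integral_ne_zero (hf_prob ▸ one_ne_zero)) (.of_forall hf_nonneg)
      two_pos (lt_add_of_pos_right 2 hε) hx₀
      fun γ hγ => (hpotter x₀ le_rfl γ hγ).trans_eq (by ring)
  exact fb_residence_negligible_general f m (.of_forall hf_nonneg) hf_prob hsecond hm_def
end
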